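/- Let f ∈ ℂ[x,y] be a primitive homogeneous polynomial of degree d > 1 (f is not of the form g^r for r > 1). Then multiplication by f induces an isomorphism of ℂ[t]-modules between the reduced Brieskorn module B̄(f) = B(f)/B(f)_tors and C(f) = J_f/D_f; concretely, the map sending the class of g ∈ ℂ[x,y] modulo (D_f + torsion) to the class of f·g in J_f/D_f is a well-defined ℂ[t]-module isomorphism. -/

import Mathlib

/-!
Write `{f, g} = f_x g_y - f_y g_x`, so that `D_f` is the set of all `{f, g}`.

*Surjectivity.* With `E = x ∂_x + y ∂_y`, Euler's identity gives
`(E a + a) f_x + (E b + b) f_y = {f, y a - x b} + d f (a_x + b_y)`,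
and `E + 1` is onto because it scales the polynomials of degree `n` by `n + 1`. Hence
`J_f ⊆ D_f + f R`.

*Injectivity.* Let `{f, g} = f² c` with `g` homogeneous of degree `e ≥ d`. By Euler's identity
`d f g_x - e g f_x` and `d f g_y - e g f_y` are `-y f² c` and `x f² c`. If a prime `p` divides `f`
to the order `a` and `g` to an order `j < a`, then for some partial derivative, one which does not
map `p` into `(p)`, the left-hand side has order exactly `a + j - 1 < 2 a`, because `d j ≠ e a`;
this is absurd. So `g = f q`, and cancelling `f` gives `f c = {f, q}`. Therefore
`f^k c ∈ D_f` implies `f c ∈ D_f`: the kernel of multiplication by `f` on `B(f)` is the torsion.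
-/

open MvPolynomial

/-- The linear map `g ↦ f_x·∂g/∂y − f_y·∂g/∂x` whose range is `D_f`. -/
noncomputable def Dmap (f : MvPolynomial (Fin 2) ℂ) :
    MvPolynomial (Fin 2) ℂ →ₗ[ℂ] MvPolynomial (Fin 2) ℂ where
  toFun g := pderiv 0 f * pderiv 1 g - pderiv 1 f * pderiv 0 g
  map_add' g h := by simp only [map_add]; ring
  map_smul' c g := by
    simp only [Derivation.map_smul, RingHom.id_apply, smul_sub, mul_smul_comm]

/-- `D_f` as a `ℂ`-subspace of `ℂ[x,y]`. -/
noncomputable def Dsub (f : MvPolynomial (Fin 2) ℂ) :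
    Submodule ℂ (MvPolynomial (Fin 2) ℂ) :=
  LinearMap.range (Dmap f)

lemma mul_mem_Dsub (f : MvPolynomial (Fin 2) ℂ) {w : MvPolynomial (Fin 2) ℂ}
    (hw : w ∈ Dsub f) : f * w ∈ Dsub f := by
  obtain ⟨g, rfl⟩ := hw
  refine ⟨f * g, ?_⟩
  simp only [Dmap, LinearMap.coe_mk, AddHom.coe_mk, pderiv_mul]
  ring

lemma pow_mul_mem_Dsub (f : MvPolynomial (Fin 2) ℂ) (k : ℕ) {w : MvPolynomial (Fin 2) ℂ}
    (hw : w ∈ Dsub f) : f ^ k * w ∈ Dsub f := by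
  induction k with
  | zero => simpa using hw
  | succ n ih => rw [pow_succ, mul_comm (f ^ n) f, mul_assoc]; exact mul_mem_Dsub f ih

/-- The preimage in `ℂ[x,y]` of the torsion submodule `B(f)_tors ⊆ B(f) = ℂ[x,y]/D_f`,
i.e. `D_f + torsion`: the set of `g` with `f^k·g ∈ D_f` for some `k`. -/
noncomputable def Tsub (f : MvPolynomial (Fin 2) ℂ) :
    Submodule ℂ (MvPolynomial (Fin 2) ℂ) where
  carrier := {g | ∃ k : ℕ, f ^ k * g ∈ Dsub f}
  zero_mem' := ⟨0, by simp⟩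
  add_mem' := by
    rintro a b ⟨k, hk⟩ ⟨l, hl⟩
    refine ⟨k + l, ?_⟩
    have : f ^ (k + l) * (a + b) = f ^ l * (f ^ k * a) + f ^ k * (f ^ l * b) := by
      rw [pow_add]; ring
    rw [this]
    exact (Dsub f).add_mem (pow_mul_mem_Dsub f l hk) (pow_mul_mem_Dsub f k hl)
  smul_mem' := by
    rintro c g ⟨k, hk⟩
    exact ⟨k, by rw [mul_smul_comm]; exact (Dsub f).smul_mem c hk⟩

lemma mulLeft_le_comap_Tsub (f : MvPolynomial (Fin 2) ℂ) :
    Tsub f ≤ (Tsub f).comap (LinearMap.mulLeft ℂ f) := by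
  rintro g ⟨k, hk⟩
  refine ⟨k, ?_⟩
  have heq : f ^ k * (LinearMap.mulLeft ℂ f) g = f * (f ^ k * g) := by
    simp only [LinearMap.mulLeft_apply]; ring
  rw [heq]
  exact mul_mem_Dsub f hk

/-- Multiplication by `f` on the reduced Brieskorn module
`B̄(f) = B(f)/B(f)_tors = ℂ[x,y]/Tsub f` (the action of `t`). -/
noncomputable def Bbarmul (f : MvPolynomial (Fin 2) ℂ) :
    (MvPolynomial (Fin 2) ℂ ⧸ Tsub f) →ₗ[ℂ] (MvPolynomial (Fin 2) ℂ ⧸ Tsub f) :=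
  Submodule.mapQ (Tsub f) (Tsub f) (LinearMap.mulLeft ℂ f) (mulLeft_le_comap_Tsub f)

/-- The Jacobian ideal `J_f = (f_x, f_y)` regarded as a `ℂ`-subspace of `ℂ[x,y]`. -/
noncomputable def Jsub (f : MvPolynomial (Fin 2) ℂ) :
    Submodule ℂ (MvPolynomial (Fin 2) ℂ) :=
  Submodule.restrictScalars ℂ
    (Ideal.span ({pderiv 0 f, pderiv 1 f} : Set (MvPolynomial (Fin 2) ℂ)))

lemma mulLeft_mem_Jsub (f : MvPolynomial (Fin 2) ℂ) :
    ∀ x ∈ Jsub f, f * x ∈ Jsub f := fun _ hx =>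
  Ideal.mul_mem_left _ f hx

/-- Multiplication by `f` on `J_f`. -/
noncomputable def Jmul (f : MvPolynomial (Fin 2) ℂ) : Jsub f →ₗ[ℂ] Jsub f :=
  (LinearMap.mulLeft ℂ f).restrict (p := Jsub f) (q := Jsub f) (mulLeft_mem_Jsub f)

lemma Jmul_le_comap (f : MvPolynomial (Fin 2) ℂ) :
    (Dsub f).comap (Jsub f).subtype ≤
      ((Dsub f).comap (Jsub f).subtype).comap (Jmul f) := by
  rintro ⟨x, hx⟩ hxD
  have : (Jsub f).subtype (Jmul f ⟨x, hx⟩) = f * x := rfl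
  simp only [Submodule.mem_comap] at hxD ⊢
  rw [this]
  exact mul_mem_Dsub f hxD

/-- Multiplication by `f` on `C(f) = J_f/D_f` (the action of `t`). -/
noncomputable def Cmul (f : MvPolynomial (Fin 2) ℂ) :
    (Jsub f ⧸ (Dsub f).comap (Jsub f).subtype) →ₗ[ℂ]
      (Jsub f ⧸ (Dsub f).comap (Jsub f).subtype) :=
  Submodule.mapQ _ _ (Jmul f) (Jmul_le_comap f)

section WeightedWronskian

variable {k R : Type*} [CommRing R]

/-- The Wronskian of `f` and `g` with weights `m` and `n` (the first Rankin–Cohen bracket), i.e.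
the numerator of the derivative of `g ^ m / f ^ n` up to powers of `f` and `g`. For homogeneous
polynomials of degrees `m` and `n` it measures the failure of `f` and `g` to be proportional. -/
def weightedWronskian [CommRing k] [Algebra k R] (D : Derivation k R R) (m n : ℕ) (f g : R) : R :=
  m * f * D g - n * g * D f

lemma mul_derivation_pow_mul [CommRing k] [Algebra k R] (D : Derivation k R R) (p u : R) (a : ℕ) :
    p * D (p ^ a * u) = p ^ a * (a * u * D p + p * D u) := by
  have hpow : p * D (p ^ a) = a * p ^ a * D p := by
    rw [D.leibniz_pow]
    cases a with
    | zero => simp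
    | succ a => simp only [nsmul_eq_mul, smul_eq_mul, add_tsub_cancel_right]; ring
  rw [D.leibniz, smul_eq_mul, smul_eq_mul]
  linear_combination u * hpow

lemma mul_weightedWronskian_pow_mul [CommRing k] [Algebra k R] (D : Derivation k R R)
    (m n : ℕ) (p u v : R) (a j : ℕ) :
    p * weightedWronskian D m n (p ^ a * u) (p ^ j * v) =
      p ^ (a + j) * ((m * j - n * a) * u * v * D p + p * weightedWronskian D m n u v) := by
  simp only [weightedWronskian, pow_add]
  linear_combination m * (p ^ a * u) * mul_derivation_pow_mul D p v j -
    n * (p ^ j * v) * mul_derivation_pow_mul D p u a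

lemma dvd_of_pow_dvd_weightedWronskian [CommRing k] [Algebra k R] [IsDomain R]
    {D : Derivation k R R} {m n a j : ℕ} {p u v : R} (hp : Prime p) (hDp : ¬p ∣ D p)
    (hmn : ¬p ∣ (m * j - n * a : R)) (hu : ¬p ∣ u)
    (h : p ^ (a + j) ∣ weightedWronskian D m n (p ^ a * u) (p ^ j * v)) : p ∣ v := by
  have hdvd : p ∣ (m * j - n * a) * u * v * D p + p * weightedWronskian D m n u v := by
    rw [← mul_dvd_mul_iff_left (pow_ne_zero (a + j) hp.ne_zero),
      ← mul_weightedWronskian_pow_mul, mul_comm]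
    exact mul_dvd_mul_left p h
  have hprod : p ∣ (m * j - n * a) * u * v * D p :=
    (dvd_add_left (dvd_mul_right p _)).mp hdvd
  simpa [hp.dvd_mul, hmn, hu, hDp] using hprod

lemma not_dvd_natCast_sub_natCast_of_prime [Field k] [CharZero k] [Algebra k R] {p : R}
    (hp : Prime p) {r s : ℕ} (hrs : r ≠ s) : ¬p ∣ (r - s : R) := by
  have hunit : IsUnit (algebraMap k R (r - s)) :=
    (IsUnit.mk0 _ (sub_ne_zero.mpr (Nat.cast_injective.ne hrs))).map _
  rw [map_sub, map_natCast, map_natCast] at hunit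
  exact fun h => hp.not_isUnit (isUnit_of_dvd_unit h hunit)

theorem dvd_of_forall_sq_dvd_weightedWronskian [Field k] [CharZero k] [Algebra k R] [IsDomain R]
    [UniqueFactorizationMonoid R] {ι : Type*} {D : ι → Derivation k R R}
    (hD : ∀ p : R, Prime p → ∃ i, ¬p ∣ D i p) {m n : ℕ} (hn : 0 < n) (hmn : m ≤ n) {f g : R}
    (hf : f ≠ 0) (h : ∀ i, f ^ 2 ∣ weightedWronskian (D i) m n f g) : f ∣ g := by
  refine (UniqueFactorizationMonoid.dvd_iff_emultiplicity_le hf).mpr fun p hp => ?_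
  obtain ⟨a, u, hu, rfl⟩ := WfDvdMonoid.max_power_factor hf hp.irreducible
  obtain ⟨i, hi⟩ := hD p hp
  have hpow : ∀ j ≤ a, p ^ j ∣ g := by
    intro j hj
    induction j with
    | zero => simp
    | succ j ih =>
      obtain ⟨v, rfl⟩ := ih (by omega)
      have hweights : m * j ≠ n * a :=
        ((Nat.mul_le_mul_right j hmn).trans_lt (Nat.mul_lt_mul_of_pos_left hj hn)).ne
      have hcoeff : ¬p ∣ (m * j - n * a : R) := by
        exact_mod_cast not_dvd_natCast_sub_natCast_of_prime (k := k) hp hweights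
      have hle : p ^ (a + j) ∣ (p ^ a * u) ^ 2 := by
        rw [mul_pow, ← pow_mul]
        exact (pow_dvd_pow p (by omega)).mul_right _
      rw [pow_succ]
      exact mul_dvd_mul_left _ <|
        dvd_of_pow_dvd_weightedWronskian hp hi hcoeff hu (hle.trans (h i))
  have hmult : emultiplicity p (p ^ a * u) = a :=
    emultiplicity_eq_coe.mpr ⟨dvd_mul_right _ _, by
      rwa [pow_succ, mul_dvd_mul_iff_left (pow_ne_zero a hp.ne_zero)]⟩
  rw [hmult]
  exact le_emultiplicity_of_pow_dvd (hpow a le_rfl)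

end WeightedWronskian

section PartialDerivatives

variable {σ R : Type*}

lemma totalDegree_pderiv_lt [CommSemiring R] {p : MvPolynomial σ R} {i : σ}
    (h : pderiv i p ≠ 0) : (pderiv i p).totalDegree < p.totalDegree := by
  have hlt : ∀ m ∈ (pderiv i p).support, (m.sum fun _ e => e) < p.totalDegree := by
    intro m hm
    have hcoeff : coeff (m + Finsupp.single i 1) p ≠ 0 := by
      intro h0
      rw [mem_support_iff, coeff_pderiv, h0, zero_mul] at hm
      exact hm rfl
    have hle := le_totalDegree (mem_support_iff.mpr hcoeff)
    rw [Finsupp.sum_add_index' (fun _ => rfl) (fun _ _ _ => rfl),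
      Finsupp.sum_single_index rfl] at hle
    omega
  obtain ⟨m, hm⟩ := support_nonempty.mpr h
  exact (Finset.sup_lt_iff (bot_le.trans_lt (hlt m hm))).mpr hlt

lemma exists_pderiv_ne_zero [CommSemiring R] [NoZeroDivisors R] [CharZero R]
    {p : MvPolynomial σ R} (hp : p.totalDegree ≠ 0) : ∃ i, pderiv i p ≠ 0 := by
  rw [Ne, totalDegree_eq_zero_iff] at hp
  push Not at hp
  obtain ⟨m, hm, i, hi⟩ := hp
  refine ⟨i, fun h0 => ?_⟩
  have hsub : m - Finsupp.single i 1 + Finsupp.single i 1 = m := by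
    rw [Finsupp.sub_single_one_add hi, add_tsub_cancel_right]
  have hcoeff := congrArg (coeff (m - Finsupp.single i 1)) h0
  rw [coeff_pderiv, hsub, coeff_zero] at hcoeff
  exact mul_ne_zero (mem_support_iff.mp hm) (Nat.cast_add_one_ne_zero _) hcoeff

lemma exists_not_dvd_pderiv [CommRing R] [IsDomain R] [CharZero R] {p : MvPolynomial σ R}
    (hp : p.totalDegree ≠ 0) : ∃ i, ¬p ∣ pderiv i p := by
  obtain ⟨i, hi⟩ := exists_pderiv_ne_zero hp
  exact ⟨i, fun hdvd =>
    (totalDegree_pderiv_lt hi).not_ge (totalDegree_le_of_dvd_of_isDomain hdvd hi)⟩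

lemma totalDegree_ne_zero_of_prime {k : Type*} [Field k] {p : MvPolynomial σ k} (hp : Prime p) :
    p.totalDegree ≠ 0 := by
  intro h0
  obtain ⟨c, rfl⟩ : ∃ c, p = C c := ⟨_, totalDegree_eq_zero_iff_eq_C.mp h0⟩
  have hc : c ≠ 0 := by
    rintro rfl
    exact hp.ne_zero C_0
  exact hp.not_isUnit ((IsUnit.mk0 c hc).map C)

lemma mem_ideal_of_forall_pderiv_mem [CommSemiring R] [Finite σ] {f : MvPolynomial σ R} {d : ℕ}
    (hf : f.IsHomogeneous d) (hd : IsUnit (d : R)) {I : Ideal (MvPolynomial σ R)}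
    (h : ∀ i, pderiv i f ∈ I) : f ∈ I := by
  cases nonempty_fintype σ
  have hmem : C (d : R) * f ∈ I := by
    rw [map_natCast, ← nsmul_eq_mul, ← hf.sum_X_mul_pderiv]
    exact I.sum_mem fun i _ => I.mul_mem_left _ (h i)
  exact (I.unit_mul_mem_iff_mem (hd.map C)).mp hmem

lemma exists_sum_X_mul_pderiv_add_self_eq {k : Type*} [Field k] [CharZero k] [Fintype σ]
    (a : MvPolynomial σ k) : ∃ b, ∑ i, X i * pderiv i b + b = a := by
  induction a using MvPolynomial.induction_on' with
  | monomial m c =>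
    have hdeg : ((m.degree + 1 : ℕ) : k) ≠ 0 := Nat.cast_ne_zero.mpr m.degree.succ_ne_zero
    refine ⟨monomial m (c / (m.degree + 1 : ℕ)), ?_⟩
    rw [(isHomogeneous_monomial _ rfl).sum_X_mul_pderiv, ← succ_nsmul, ← map_nsmul,
      nsmul_eq_mul, mul_div_cancel₀ _ hdeg]
  | add p q hp hq =>
    obtain ⟨p', rfl⟩ := hp
    obtain ⟨q', rfl⟩ := hq
    refine ⟨p' + q', ?_⟩
    simp only [map_add, mul_add, Finset.sum_add_distrib]
    ring

lemma homogeneousComponent_linearMap_apply [CommSemiring R] {τ : Type*}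
    {L : MvPolynomial σ R →ₗ[R] MvPolynomial τ R} {s : ℕ → ℕ}
    (hL : ∀ i p, p.IsHomogeneous i → (L p).IsHomogeneous (s i)) {n : ℕ}
    (hn : ∀ i, s i = s n → i = n) (p : MvPolynomial σ R) :
    homogeneousComponent (s n) (L p) = L (homogeneousComponent n p) := by
  have hterm (i : ℕ) : homogeneousComponent (s n) (L (homogeneousComponent i p)) =
      if i = n then L (homogeneousComponent n p) else 0 := by
    rw [homogeneousComponent_of_mem (hL i _ (homogeneousComponent_isHomogeneous i p))]
    split_ifs with h₁ h₂ h₂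
    · rw [h₂]
    · exact absurd (hn i h₁.symm) h₂
    · exact absurd (congrArg s h₂.symm) h₁
    · rfl
  conv_lhs => rw [← sum_homogeneousComponent p]
  simp only [map_sum, hterm, Finset.sum_ite_eq', Finset.mem_range]
  split_ifs with h
  · rfl
  · rw [homogeneousComponent_eq_zero n p (by omega), map_zero]

end PartialDerivatives

section Brieskorn

variable {f : MvPolynomial (Fin 2) ℂ} {d : ℕ}

lemma Dmap_apply (f g : MvPolynomial (Fin 2) ℂ) :
    Dmap f g = pderiv 0 f * pderiv 1 g - pderiv 1 f * pderiv 0 g := rfl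

lemma Dmap_self_mul (f g : MvPolynomial (Fin 2) ℂ) : Dmap f (f * g) = f * Dmap f g := by
  simp only [Dmap_apply, pderiv_mul]
  ring

lemma euler_identity_fin_two {R : Type*} [CommSemiring R] {f : MvPolynomial (Fin 2) R}
    (hf : f.IsHomogeneous d) :
    X 0 * pderiv 0 f + X 1 * pderiv 1 f = (d : MvPolynomial (Fin 2) R) * f := by
  rw [← Fin.sum_univ_two fun i => X i * pderiv i f, hf.sum_X_mul_pderiv, nsmul_eq_mul]

lemma mul_mem_Jsub (hd : 0 < d) (hf : f.IsHomogeneous d) (g : MvPolynomial (Fin 2) ℂ) :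
    f * g ∈ Jsub f := by
  have hunit : IsUnit (d : ℂ) := (Nat.cast_ne_zero.mpr hd.ne').isUnit
  refine Ideal.mul_mem_right g _ (mem_ideal_of_forall_pderiv_mem hf hunit fun i => ?_)
  fin_cases i <;> exact Ideal.subset_span (by simp)

lemma isHomogeneous_Dmap (hf : f.IsHomogeneous d) {g : MvPolynomial (Fin 2) ℂ} {e : ℕ}
    (hg : g.IsHomogeneous e) : (Dmap f g).IsHomogeneous (d - 1 + (e - 1)) :=
  (hf.pderiv.mul hg.pderiv).sub (hf.pderiv.mul hg.pderiv)

lemma weightedWronskian_pderiv_zero (hf : f.IsHomogeneous d) {g : MvPolynomial (Fin 2) ℂ} {e : ℕ}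
    (hg : g.IsHomogeneous e) :
    weightedWronskian (pderiv 0) d e f g = -X 1 * Dmap f g := by
  rw [weightedWronskian, Dmap_apply, ← euler_identity_fin_two hf, ← euler_identity_fin_two hg]
  ring

lemma weightedWronskian_pderiv_one (hf : f.IsHomogeneous d) {g : MvPolynomial (Fin 2) ℂ} {e : ℕ}
    (hg : g.IsHomogeneous e) :
    weightedWronskian (pderiv 1) d e f g = X 0 * Dmap f g := by
  rw [weightedWronskian, Dmap_apply, ← euler_identity_fin_two hf, ← euler_identity_fin_two hg]
  ring

lemma dvd_of_sq_dvd_Dmap (hf : f.IsHomogeneous d) (hf0 : f ≠ 0) {g : MvPolynomial (Fin 2) ℂ}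
    {e : ℕ} (hg : g.IsHomogeneous e) (he : 0 < e) (hde : d ≤ e) (h : f ^ 2 ∣ Dmap f g) :
    f ∣ g := by
  refine dvd_of_forall_sq_dvd_weightedWronskian (D := pderiv)
    (fun p hp => exists_not_dvd_pderiv (totalDegree_ne_zero_of_prime hp)) he hde hf0 fun i => ?_
  fin_cases i
  · exact weightedWronskian_pderiv_zero hf hg ▸ h.mul_left _
  · exact weightedWronskian_pderiv_one hf hg ▸ h.mul_left _

lemma mul_mem_Dsub_of_sq_mul_eq_Dmap (hf : f.IsHomogeneous d) (hf0 : f ≠ 0)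
    {c g : MvPolynomial (Fin 2) ℂ} {e : ℕ} (hg : g.IsHomogeneous e) (he : 0 < e) (hde : d ≤ e)
    (h : f ^ 2 * c = Dmap f g) : f * c ∈ Dsub f := by
  obtain ⟨q, rfl⟩ := dvd_of_sq_dvd_Dmap hf hf0 hg he hde (h ▸ dvd_mul_right _ _)
  refine ⟨q, mul_left_cancel₀ hf0 ?_⟩
  rw [← Dmap_self_mul, ← h]
  ring

lemma mul_mem_Dsub_of_sq_mul_mem_Dsub (hd : 0 < d) (hf : f.IsHomogeneous d)
    {c : MvPolynomial (Fin 2) ℂ} (h : f ^ 2 * c ∈ Dsub f) : f * c ∈ Dsub f := by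
  rcases eq_or_ne f 0 with rfl | hf0
  · simp
  obtain ⟨g, hg⟩ := h
  rw [← sum_homogeneousComponent c, Finset.mul_sum]
  refine Submodule.sum_mem _ fun n _ => ?_
  refine mul_mem_Dsub_of_sq_mul_eq_Dmap hf hf0
    (homogeneousComponent_isHomogeneous (d + n + 2) g) (by omega) (by omega) ?_
  have hDmap := homogeneousComponent_linearMap_apply (L := Dmap f) (n := d + n + 2)
    (fun _ _ hp => isHomogeneous_Dmap hf hp) (fun _ hi => by omega) g
  have hmul := homogeneousComponent_linearMap_apply (L := LinearMap.mulLeft ℂ (f ^ 2)) (n := n)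
    (fun _ _ hp => (hf.pow 2).mul hp) (fun _ hi => by omega) c
  have hdeg : d - 1 + (d + n + 2 - 1) = d * 2 + n := by omega
  rw [← hDmap, hg, hdeg]
  exact hmul.symm

lemma mul_mem_Dsub_of_pow_mul_mem_Dsub (hd : 0 < d) (hf : f.IsHomogeneous d)
    {c : MvPolynomial (Fin 2) ℂ} {k : ℕ} (h : f ^ (k + 1) * c ∈ Dsub f) : f * c ∈ Dsub f := by
  induction k with
  | zero => simpa using h
  | succ k ih =>
    refine ih ?_
    rw [pow_succ', mul_assoc]
    refine mul_mem_Dsub_of_sq_mul_mem_Dsub hd hf ?_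
    rwa [← mul_assoc, ← pow_add, add_comm 2 k]

theorem mem_Tsub_iff (hd : 0 < d) (hf : f.IsHomogeneous d) {g : MvPolynomial (Fin 2) ℂ} :
    g ∈ Tsub f ↔ f * g ∈ Dsub f := by
  refine ⟨fun ⟨k, hk⟩ => mul_mem_Dsub_of_pow_mul_mem_Dsub hd hf (k := k) ?_,
    fun h => ⟨1, by rwa [pow_one]⟩⟩
  rw [pow_succ', mul_assoc]
  exact mul_mem_Dsub f hk

-- Cartan's formula `L_E α = d(ι_E α) + ι_E(dα)` for `α = a dy - b dx` and the Euler field `E`,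
-- multiplied by `df` and divided by `dx ∧ dy`.
lemma cartan_identity (hf : f.IsHomogeneous d) (a b : MvPolynomial (Fin 2) ℂ) :
    (∑ i, X i * pderiv i a + a) * pderiv 0 f + (∑ i, X i * pderiv i b + b) * pderiv 1 f =
      Dmap f (X 1 * a - X 0 * b) + f * (d * (pderiv 0 a + pderiv 1 b)) := by
  have h01 : pderiv 0 (X 1 : MvPolynomial (Fin 2) ℂ) = 0 := pderiv_X_of_ne one_ne_zero
  have h10 : pderiv 1 (X 0 : MvPolynomial (Fin 2) ℂ) = 0 := pderiv_X_of_ne zero_ne_one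
  simp only [Dmap_apply, Fin.sum_univ_two, map_sub, pderiv_mul, pderiv_X_self, h01, h10]
  linear_combination (pderiv 0 a + pderiv 1 b) * euler_identity_fin_two hf

theorem exists_mul_sub_mem_Dsub (hf : f.IsHomogeneous d) {w : MvPolynomial (Fin 2) ℂ}
    (hw : w ∈ Jsub f) : ∃ c, f * c - w ∈ Dsub f := by
  obtain ⟨a, b, rfl⟩ := Ideal.mem_span_pair.mp hw
  obtain ⟨a, rfl⟩ := exists_sum_X_mul_pderiv_add_self_eq a
  obtain ⟨b, rfl⟩ := exists_sum_X_mul_pderiv_add_self_eq b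
  refine ⟨d * (pderiv 0 a + pderiv 1 b), -(X 1 * a - X 0 * b), ?_⟩
  rw [cartan_identity hf, map_neg]
  ring

/-- The map `ℂ[x,y] → C(f) = J_f/D_f`, `g ↦ [f·g]`, for `f` homogeneous of positive degree
(so that `f ∈ J_f`). -/
noncomputable def mulToC (hd : 0 < d) (hf : f.IsHomogeneous d) :
    MvPolynomial (Fin 2) ℂ →ₗ[ℂ] Jsub f ⧸ (Dsub f).comap (Jsub f).subtype :=
  (Submodule.mkQ _).comp ((LinearMap.mulLeft ℂ f).codRestrict (Jsub f) (mul_mem_Jsub hd hf))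

lemma ker_mulToC (hd : 0 < d) (hf : f.IsHomogeneous d) : LinearMap.ker (mulToC hd hf) = Tsub f := by
  ext g
  rw [mem_Tsub_iff hd hf]
  exact Submodule.Quotient.mk_eq_zero _

lemma mulToC_surjective (hd : 0 < d) (hf : f.IsHomogeneous d) :
    Function.Surjective (mulToC hd hf) := by
  intro q
  obtain ⟨⟨w, hw⟩, rfl⟩ := Submodule.Quotient.mk_surjective _ q
  obtain ⟨c, hc⟩ := exists_mul_sub_mem_Dsub hf hw
  exact ⟨c, (Submodule.Quotient.eq _).mpr hc⟩

/-- The `ℂ`-linear isomorphism `B̄(f) ≃ C(f)` induced by multiplication by `f`, for `f`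
homogeneous of positive degree. -/
noncomputable def reducedBrieskornEquiv (hd : 0 < d) (hf : f.IsHomogeneous d) :
    (MvPolynomial (Fin 2) ℂ ⧸ Tsub f) ≃ₗ[ℂ] Jsub f ⧸ (Dsub f).comap (Jsub f).subtype :=
  (Submodule.quotEquivOfEq _ _ (ker_mulToC hd hf).symm).trans
    ((mulToC hd hf).quotKerEquivOfSurjective (mulToC_surjective hd hf))

lemma reducedBrieskornEquiv_mk (hd : 0 < d) (hf : f.IsHomogeneous d)
    (g : MvPolynomial (Fin 2) ℂ) :
    reducedBrieskornEquiv hd hf (Submodule.Quotient.mk g) =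
      Submodule.Quotient.mk ⟨f * g, mul_mem_Jsub hd hf g⟩ := rfl

lemma reducedBrieskornEquiv_Bbarmul (hd : 0 < d) (hf : f.IsHomogeneous d)
    (x : MvPolynomial (Fin 2) ℂ ⧸ Tsub f) :
    reducedBrieskornEquiv hd hf (Bbarmul f x) = Cmul f (reducedBrieskornEquiv hd hf x) := by
  obtain ⟨g, rfl⟩ := Submodule.Quotient.mk_surjective _ x
  rfl

theorem statement10_general (hd : 0 < d) (hf : f.IsHomogeneous d) :
    (∀ g : MvPolynomial (Fin 2) ℂ, f * g ∈ Jsub f) ∧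
      ∃ e : Module.AEval' (Bbarmul f) ≃ₗ[Polynomial ℂ] Module.AEval' (Cmul f),
        ∀ (g : MvPolynomial (Fin 2) ℂ) (hg : f * g ∈ Jsub f),
          e (Module.AEval'.of (Bbarmul f) (Submodule.Quotient.mk g)) =
            Module.AEval'.of (Cmul f) (Submodule.Quotient.mk ⟨f * g, hg⟩) := by
  refine ⟨mul_mem_Jsub hd hf, LinearEquiv.ofAEval _
    ((reducedBrieskornEquiv hd hf).trans (Module.AEval'.of (Cmul f))) fun x => ?_, fun g _ => ?_⟩
  · rw [LinearEquiv.trans_apply, LinearEquiv.trans_apply, Module.AEval'.X_smul_of]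
    exact congrArg _ (reducedBrieskornEquiv_Bbarmul hd hf x)
  · exact congrArg (Module.AEval'.of (Cmul f)) (reducedBrieskornEquiv_mk hd hf g)

end Brieskorn

/-- For `f ∈ ℂ[x,y]` primitive homogeneous of degree `d > 1`,
multiplication by `f` induces an isomorphism of `ℂ[t]`-modules
`B̄(f) = B(f)/B(f)_tors ≅ C(f) = J_f/D_f`, sending the class of `g` modulo
`D_f + torsion` to the class of `f·g` in `J_f/D_f`. -/
theorem statement10 (f : MvPolynomial (Fin 2) ℂ) (d : ℕ) (hd : 1 < d)
    (hf : f.IsHomogeneous d)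
    (hprim : ¬ ∃ (g : MvPolynomial (Fin 2) ℂ) (r : ℕ), 1 < r ∧ f = g ^ r) :
    (∀ g : MvPolynomial (Fin 2) ℂ, f * g ∈ Jsub f) ∧
      ∃ e : Module.AEval' (Bbarmul f) ≃ₗ[Polynomial ℂ] Module.AEval' (Cmul f),
        ∀ (g : MvPolynomial (Fin 2) ℂ) (hg : f * g ∈ Jsub f),
          e (Module.AEval'.of (Bbarmul f) (Submodule.Quotient.mk g)) =
            Module.AEval'.of (Cmul f) (Submodule.Quotient.mk ⟨f * g, hg⟩) :=
  statement10_general (zero_lt_one.trans hd) hf
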